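/- Let K = ⌈n^{1−ε}⌉ for a constant 0 < ε < 1, let M = 1, and impose no proximity constraint (r = √n, so the two candidates of Strategy II are chosen uniformly among all nodes caching the requested file). Suppose the popularity distribution P satisfies ∑_{j=1}^K (p_j·n)^{−c} = o(1) for some constant c > 0. Then Strategy II achieves maximum load L = O(log log n) with probability 1 − o(1). In particular, the Uniform distribution over K = ⌈n^{1−ε}⌉ files satisfies this hypothesis, and the Zipf distribution with parameter γ ≥ 1 satisfies it whenever ε ∈ ((γ−1)/γ, 1). -/

import Mathlib

open scoped Classical BigOperators
open Filter

/-- Nodes of the `m × m` torus grid (a `√n × √n` grid with wrap-around, `n = m²`). -/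
abbrev Node (m : ℕ) := Fin m × Fin m

/-- Wrap-around distance between two coordinates in `Fin m`. -/
def cdist {m : ℕ} (a b : Fin m) : ℕ :=
  min ((a.val + m - b.val) % m) ((b.val + m - a.val) % m)

/-- Graph (shortest-path) distance on the torus grid. -/
def torusDist {m : ℕ} (u v : Node m) : ℕ := cdist u.1 v.1 + cdist u.2 v.2

/-- A cache placement: each of the `m²` nodes fills `M` cache slots with files from a
library of `K` files.  Under the Uniform popularity distribution the random placement
is uniform over all such functions (each slot i.i.d. uniform on the `K` files). -/
abbrev Placement (m M K : ℕ) := Node m → Fin M → Fin K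

/-- Node `u` has cached file `j`. -/
def cached {m M K : ℕ} (ω : Placement m M K) (u : Node m) (j : Fin K) : Prop :=
  ∃ i, ω u i = j

/-- Probability of an event under the uniform measure on a finite type. -/
noncomputable def unifProb {Ω : Type*} [Fintype Ω] (E : Set Ω) : ℝ :=
  ((Finset.univ.filter (fun ω => ω ∈ E)).card : ℝ) / (Fintype.card Ω : ℝ)

/-- The set of candidate servers for a request at `u` for file `j` with proximity
radius `r`. -/
noncomputable def candSet {m M K : ℕ} (ω : Placement m M K) (u : Node m) (j : Fin K)
    (r : ℕ) : Finset (Node m) :=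
  Finset.univ.filter fun v => cached ω v j ∧ torusDist u v ≤ r

/-- The load vector after the first `t` balls (requests) have been processed. -/
def loadsUpTo {V : Type*} [DecidableEq V] {n' : ℕ} (cand : Fin n' → V × V)
    (tb : Fin n' → Bool) : ℕ → V → ℕ
  | 0 => fun _ => 0
  | t + 1 => fun v =>
      if h : t < n' then
        let L := loadsUpTo cand tb t
        let c := cand ⟨t, h⟩
        let w := if L c.1 < L c.2 then c.1
          else if L c.2 < L c.1 then c.2
          else if tb ⟨t, h⟩ then c.1 else c.2
        if v = w then L v + 1 else L v
      else loadsUpTo cand tb t v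

/-- The maximum load after all `n'` requests. -/
noncomputable def maxLoadII {V : Type*} [DecidableEq V] [Fintype V] {n' : ℕ}
    (cand : Fin n' → V × V) (tb : Fin n' → Bool) : ℕ :=
  Finset.univ.sup (loadsUpTo cand tb n')

/-- Sample space of Strategy II. -/
abbrev SampleII (m M K n' : ℕ) :=
  Placement m M K × (Fin n' → Node m × Fin K) × (Fin n' → Node m × Node m) ×
    (Fin n' → Bool)

/-- Probability weight of a sample point of Strategy II under the popularity
distribution `p`: each cache slot is drawn i.i.d. from `p`, each request has a uniform
origin and a `p`-distributed file, the two candidates of request `t` are drawn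
uniformly from the caches of the requested file within distance `r` of the origin, and
the tie-breaking bits are uniform. -/
noncomputable def weightIIP (m M K r n' : ℕ) (p : Fin K → ℝ)
    (x : SampleII m M K n') : ℝ :=
  (∏ u : Node m, ∏ i : Fin M, p (x.1 u i)) *
    (1 / ((m ^ 2 : ℕ) : ℝ)) ^ n' * (∏ t : Fin n', p (x.2.1 t).2) * (1 / 2 ^ n') *
    ∏ t : Fin n',
      if (x.2.2.1 t).1 ∈ candSet x.1 (x.2.1 t).1 (x.2.1 t).2 r ∧
          (x.2.2.1 t).2 ∈ candSet x.1 (x.2.1 t).1 (x.2.1 t).2 r then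
        1 / ((candSet x.1 (x.2.1 t).1 (x.2.1 t).2 r).card : ℝ) ^ 2
      else 0

/-- Probability of an event for Strategy II under popularity distribution `p`. -/
noncomputable def probIIP (m M K r n' : ℕ) (p : Fin K → ℝ)
    (E : Set (SampleII m M K n')) : ℝ :=
  ∑ x ∈ Finset.univ.filter (fun x => x ∈ E), weightIIP m M K r n' p x

/-- Library size `K = ⌈n^(1-ε)⌉`. -/
noncomputable def Kf (ε : ℝ) (n : ℕ) : ℕ := ⌈(n : ℝ) ^ (1 - ε)⌉₊

/-- The Zipf popularity distribution with parameter `γ` on `K` files. -/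
noncomputable def zipfP (K : ℕ) (γ : ℝ) (j : Fin K) : ℝ :=
  (((j.val + 1 : ℕ) : ℝ) ^ γ)⁻¹ / ∑ i : Fin K, (((i.val + 1 : ℕ) : ℝ) ^ γ)⁻¹


/-! ### Resampling and adaptive products -/

lemma aux_sum_resample {ι X : Type*} [Fintype ι] [DecidableEq ι] [Fintype X]
    (w : ι → X → ℝ) (t : ι) (hw : ∑ x, w t x = 1) (Φ : (ι → X) → ℝ) :
    ∑ c : ι → X, (∏ s, w s (c s)) * Φ c =
      ∑ c : ι → X, (∏ s, w s (c s)) * ∑ x, w t x * Φ (Function.update c t x) := by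
  have hprod : ∀ (c : ι → X) (x : X), (∏ s, w s (c s)) * w t x =
      (∏ s, w s (Function.update c t x s)) * w t (c t) := by
    intro c x
    rw [← Finset.mul_prod_erase Finset.univ (fun s => w s (c s)) (Finset.mem_univ t),
      ← Finset.mul_prod_erase Finset.univ (fun s => w s (Function.update c t x s))
        (Finset.mem_univ t)]
    have : ∏ s ∈ Finset.univ.erase t, w s (Function.update c t x s) =
        ∏ s ∈ Finset.univ.erase t, w s (c s) := by
      apply Finset.prod_congr rfl
      intro s hs
      rw [Function.update_of_ne (Finset.ne_of_mem_erase hs)]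
    rw [this]
    simp only [Function.update_self]
    ring
  have hR : ∑ c : ι → X, (∏ s, w s (c s)) * ∑ x, w t x * Φ (Function.update c t x) =
      ∑ y : (ι → X) × X, (∏ s, w s (Function.update y.1 t y.2 s)) * w t (y.1 t) *
        Φ (Function.update y.1 t y.2) := by
    rw [Fintype.sum_prod_type]
    apply Finset.sum_congr rfl
    intro c _
    rw [Finset.mul_sum]
    apply Finset.sum_congr rfl
    intro x _
    rw [← hprod]; ring
  have hL : ∑ c : ι → X, (∏ s, w s (c s)) * Φ c =
      ∑ y : (ι → X) × X, (∏ s, w s (y.1 s)) * w t y.2 * Φ y.1 := by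
    rw [Fintype.sum_prod_type]
    apply Finset.sum_congr rfl
    intro c _
    simp only
    rw [← Finset.sum_mul, ← Finset.mul_sum, hw, mul_one]
  rw [hL, hR]
  let e : (ι → X) × X → (ι → X) × X := fun y => (Function.update y.1 t y.2, y.1 t)
  have he : Function.Involutive e := by
    rintro ⟨c, x⟩
    simp [e]
  symm
  exact Fintype.sum_equiv he.toPerm _ _ (fun y => rfl)

lemma aux_adaptive {X : Type*} [Fintype X] {n : ℕ} (w : Fin n → X → ℝ)
    (hw0 : ∀ t x, 0 ≤ w t x) (hw : ∀ t, ∑ x, w t x = 1)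
    (g : ℕ → (Fin n → X) → ℝ) (hg0 : ∀ t c, 0 ≤ g t c)
    (hloc : ∀ (t : Fin n) (s : ℕ), s < t → ∀ c x, g s (Function.update c t x) = g s c)
    (B : ℕ → ℝ) (hB0 : ∀ t, 0 ≤ B t)
    (hB : ∀ (t : Fin n) c, ∑ x, w t x * g t (Function.update c t x) ≤ B t) :
    ∑ c : Fin n → X, (∏ s, w s (c s)) * ∏ s ∈ Finset.range n, g s c ≤
      ∏ s ∈ Finset.range n, B s := by
  have hW0 : ∀ c : Fin n → X, 0 ≤ ∏ s, w s (c s) := fun c =>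
    Finset.prod_nonneg fun s _ => hw0 _ _
  have key : ∀ k, k ≤ n → ∑ c : Fin n → X, (∏ s, w s (c s)) * ∏ s ∈ Finset.range k, g s c ≤
      ∏ s ∈ Finset.range k, B s := by
    intro k
    induction k with
    | zero =>
      intro _
      simp only [Finset.range_zero, Finset.prod_empty, mul_one]
      rw [← Fintype.prod_sum]
      simp [hw]
    | succ k ih =>
      intro hk
      have ih := ih (by omega)
      let t : Fin n := ⟨k, hk⟩
      rw [aux_sum_resample w t (hw t)]
      have : ∀ c : Fin n → X, ∑ x, w t x * ∏ s ∈ Finset.range (k+1), g s (Function.update c t x)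
          ≤ (∏ s ∈ Finset.range k, g s c) * B k := by
        intro c
        calc ∑ x, w t x * ∏ s ∈ Finset.range (k+1), g s (Function.update c t x)
            = (∏ s ∈ Finset.range k, g s c) * ∑ x, w t x * g t (Function.update c t x) := by
              rw [Finset.mul_sum]
              apply Finset.sum_congr rfl
              intro x _
              rw [Finset.prod_range_succ]
              have : ∏ s ∈ Finset.range k, g s (Function.update c t x) =
                  ∏ s ∈ Finset.range k, g s c := by
                apply Finset.prod_congr rfl
                intro s hs
                exact hloc t s (Finset.mem_range.1 hs) c x
              rw [this]; ring
          _ ≤ _ := mul_le_mul_of_nonneg_left (hB t c) (Finset.prod_nonneg fun s _ => hg0 _ _)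
      calc _ ≤ ∑ c : Fin n → X, (∏ s, w s (c s)) * ((∏ s ∈ Finset.range k, g s c) * B k) :=
            Finset.sum_le_sum fun c _ => mul_le_mul_of_nonneg_left (this c) (hW0 c)
        _ = (∑ c : Fin n → X, (∏ s, w s (c s)) * ∏ s ∈ Finset.range k, g s c) * B k := by
            rw [Finset.sum_mul]
            exact Finset.sum_congr rfl fun c _ => by ring
        _ ≤ _ := by
            rw [Finset.prod_range_succ]
            exact mul_le_mul_of_nonneg_right ih (hB0 k)
  exact key n le_rfl

/-! ### The load process -/

section load
variable {V : Type*} [DecidableEq V] {n' : ℕ}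

lemma aux_loads_succ (cand : Fin n' → V × V) (tb : Fin n' → Bool) (t : Fin n') :
    ∃ w, (w = (cand t).1 ∨ w = (cand t).2) ∧
      loadsUpTo cand tb t w ≤ loadsUpTo cand tb t (cand t).1 ∧
      loadsUpTo cand tb t w ≤ loadsUpTo cand tb t (cand t).2 ∧
      ∀ v, loadsUpTo cand tb (t + 1) v =
        if v = w then loadsUpTo cand tb t v + 1 else loadsUpTo cand tb t v := by
  refine ⟨if loadsUpTo cand tb t (cand t).1 < loadsUpTo cand tb t (cand t).2 then (cand t).1
          else if loadsUpTo cand tb t (cand t).2 < loadsUpTo cand tb t (cand t).1 then (cand t).2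
          else if tb t then (cand t).1 else (cand t).2, ?_, ?_, ?_, ?_⟩
  · split_ifs <;> simp
  · split_ifs <;> omega
  · split_ifs <;> omega
  · intro v
    conv_lhs => rw [loadsUpTo]
    simp only [t.2, dif_pos]

lemma aux_loads_local (cand : Fin n' → V × V) (tb : Fin n' → Bool) (t : Fin n') (x : V × V)
    (s : ℕ) (hs : s ≤ t) :
    loadsUpTo (Function.update cand t x) tb s = loadsUpTo cand tb s := by
  induction s with
  | zero => rfl
  | succ s ih =>
    have ih := ih (by omega)
    have hne : ∀ h : s < n', (⟨s, h⟩ : Fin n') ≠ t := by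
      intro h e
      have := congrArg Fin.val e
      simp at this; omega
    funext v
    conv_lhs => rw [loadsUpTo]
    conv_rhs => rw [loadsUpTo]
    by_cases h : s < n'
    · simp only [h, dif_pos, ih, Function.update_of_ne (hne h)]
    · simp only [h, dif_neg, not_false_eq_true, ih]

lemma aux_loads_mono (cand : Fin n' → V × V) (tb : Fin n' → Bool) (v : V) :
    ∀ s t : ℕ, s ≤ t → t ≤ n' → loadsUpTo cand tb s v ≤ loadsUpTo cand tb t v := by
  intro s t hst
  induction t, hst using Nat.le_induction with
  | base => intro _; exact le_rfl
  | succ t _ ih =>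
    intro ht
    obtain ⟨w, -, -, -, h⟩ := aux_loads_succ cand tb ⟨t, ht⟩
    have := ih (by omega)
    have h2 := h v
    simp only at h2
    rw [h2]
    split_ifs <;> omega

/-- number of nodes of `S` of load at least `i` at time `t` -/
def auxNu (S : Finset V) (cand : Fin n' → V × V) (tb : Fin n' → Bool) (i t : ℕ) : ℕ :=
  (S.filter fun v => i ≤ loadsUpTo cand tb t v).card

/-- the event that request `s` has type `J`, both candidates have load at least `i`, and the
number of nodes of `S` of load at least `i` is at most `b` -/
def auxHit (S : Finset V) (J : Fin n' → Prop) (tb : Fin n' → Bool) (i : ℕ) (b : ℝ) (s : ℕ)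
    (cand : Fin n' → V × V) : Prop :=
  ∃ h : s < n', J ⟨s, h⟩ ∧ i ≤ loadsUpTo cand tb s (cand ⟨s, h⟩).1 ∧
    i ≤ loadsUpTo cand tb s (cand ⟨s, h⟩).2 ∧ (auxNu S cand tb i s : ℝ) ≤ b

/-- number of such requests among the first `t` -/
noncomputable def auxCnt (S : Finset V) (J : Fin n' → Prop) (tb : Fin n' → Bool) (i : ℕ) (b : ℝ)
    (t : ℕ) (cand : Fin n' → V × V) : ℕ :=
  ∑ s ∈ Finset.range t, if auxHit S J tb i b s cand then 1 else 0

lemma aux_nu_mono (S : Finset V) (cand : Fin n' → V × V) (tb : Fin n' → Bool) (i s t : ℕ)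
    (hst : s ≤ t) (ht : t ≤ n') : auxNu S cand tb i s ≤ auxNu S cand tb i t := by
  apply Finset.card_le_card
  intro v hv
  simp only [Finset.mem_filter] at hv ⊢
  exact ⟨hv.1, hv.2.trans (aux_loads_mono cand tb v s t hst ht)⟩

lemma aux_excess_le (S : Finset V) (J : Fin n' → Prop) (cand : Fin n' → V × V)
    (tb : Fin n' → Bool) (hJ : ∀ t, ¬ J t → (cand t).1 ∉ S ∧ (cand t).2 ∉ S) (i : ℕ) (b : ℝ)
    (hb : (auxNu S cand tb i n' : ℝ) ≤ b) (t : ℕ) (ht : t ≤ n') :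
    ∑ v ∈ S, (loadsUpTo cand tb t v - i) ≤ auxCnt S J tb i b t cand := by
  induction t with
  | zero => simp [loadsUpTo]
  | succ t ih =>
    have ih := ih (by omega)
    obtain ⟨w, hw, h1, h2, h3⟩ := aux_loads_succ cand tb ⟨t, ht⟩
    simp only at h1 h2 h3
    unfold auxCnt at ih ⊢
    rw [Finset.sum_range_succ]
    by_cases hw2 : w ∈ S ∧ i ≤ loadsUpTo cand tb t w
    · have hJt : J ⟨t, ht⟩ := by
        by_contra hn
        have := hJ _ hn
        rcases hw with rfl | rfl
        · exact this.1 hw2.1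
        · exact this.2 hw2.1
      have hh : auxHit S J tb i b t cand :=
        ⟨ht, hJt, hw2.2.trans h1, hw2.2.trans h2, le_trans
          (by exact_mod_cast aux_nu_mono S cand tb i t n' (by omega) le_rfl) hb⟩
      rw [if_pos hh]
      have : ∑ v ∈ S, (loadsUpTo cand tb (t+1) v - i) ≤
          ∑ v ∈ S, ((loadsUpTo cand tb t v - i) + if v = w then 1 else 0) := by
        apply Finset.sum_le_sum
        intro v _
        rw [h3]
        split_ifs <;> omega
      rw [Finset.sum_add_distrib, Finset.sum_ite_eq'] at this
      rw [if_pos hw2.1] at this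
      omega
    · have : ∑ v ∈ S, (loadsUpTo cand tb (t+1) v - i) ≤
          ∑ v ∈ S, (loadsUpTo cand tb t v - i) := by
        apply Finset.sum_le_sum
        intro v hv
        rw [h3]
        split_ifs with hvw
        · subst hvw
          have : ¬ i ≤ loadsUpTo cand tb t v := fun h => hw2 ⟨hv, h⟩
          omega
        · exact le_rfl
      omega

lemma aux_nu_succ_le (S : Finset V) (cand : Fin n' → V × V) (tb : Fin n' → Bool) (i t : ℕ) :
    auxNu S cand tb (i+1) t ≤ ∑ v ∈ S, (loadsUpTo cand tb t v - i) := by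
  unfold auxNu
  rw [Finset.card_filter]
  apply Finset.sum_le_sum
  intro v _
  split_ifs <;> omega

lemma aux_nu_mul_le (S : Finset V) (cand : Fin n' → V × V) (tb : Fin n' → Bool) (i t : ℕ) :
    i * auxNu S cand tb i t ≤ ∑ v ∈ S, loadsUpTo cand tb t v := by
  unfold auxNu
  rw [Finset.card_filter, Finset.mul_sum]
  apply Finset.sum_le_sum
  intro v _
  split_ifs <;> omega

lemma aux_total_le (S : Finset V) (J : Fin n' → Prop) [DecidablePred J] (cand : Fin n' → V × V)
    (tb : Fin n' → Bool) (hJ : ∀ t, ¬ J t → (cand t).1 ∉ S ∧ (cand t).2 ∉ S) :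
    ∑ v ∈ S, loadsUpTo cand tb n' v ≤ (Finset.univ.filter J).card := by
  have := aux_excess_le S J cand tb hJ 0 (auxNu S cand tb 0 n') le_rfl n' le_rfl
  simp only [Nat.sub_zero] at this
  refine this.trans ?_
  unfold auxCnt
  rw [Finset.sum_range, Finset.card_filter]
  apply Finset.sum_le_sum
  intro t _
  by_cases h : J t
  · rw [if_pos h]; split_ifs <;> omega
  · rw [if_neg h, if_neg]
    rintro ⟨_, h', _⟩
    exact h h'

end load

section moment
set_option linter.unusedSectionVars false
variable {V : Type*} [DecidableEq V] [Fintype V] {n' : ℕ}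

noncomputable def auxW (C : Finset V) (x : V × V) : ℝ :=
  if x.1 ∈ C ∧ x.2 ∈ C then 1 / (C.card : ℝ) ^ 2 else 0

lemma auxW_nonneg (C : Finset V) (x : V × V) : 0 ≤ auxW C x := by
  unfold auxW; split_ifs <;> positivity

lemma auxW_sum_sub (C H : Finset V) (hH : H ⊆ C) :
    ∑ x : V × V, (if x.1 ∈ H ∧ x.2 ∈ H then auxW C x else 0) = ((H.card : ℝ) / C.card) ^ 2 := by
  have h : ∀ x : V × V, (if x.1 ∈ H ∧ x.2 ∈ H then auxW C x else 0) =
      if x ∈ H ×ˢ H then 1 / (C.card : ℝ) ^ 2 else 0 := by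
    intro x
    simp only [Finset.mem_product]
    by_cases hx : x.1 ∈ H ∧ x.2 ∈ H
    · rw [if_pos hx, if_pos hx, auxW, if_pos ⟨hH hx.1, hH hx.2⟩]
    · rw [if_neg hx, if_neg hx]
  rw [Finset.sum_congr rfl fun x _ => h x, Finset.sum_ite_mem, Finset.univ_inter,
    Finset.sum_const, Finset.card_product, nsmul_eq_mul]
  push_cast
  rw [div_pow]; ring

lemma auxW_sum (C : Finset V) (hC : C.Nonempty) : ∑ x : V × V, auxW C x = 1 := by
  have := auxW_sum_sub C C subset_rfl
  have h0 : (C.card : ℝ) ≠ 0 := by exact_mod_cast hC.card_pos.ne'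
  rw [div_self h0, one_pow] at this
  rw [← this]
  apply Finset.sum_congr rfl
  intro x _
  unfold auxW
  split_ifs <;> rfl

lemma auxW_sum_le (C : Finset V) : ∑ x : V × V, auxW C x ≤ 1 := by
  rcases C.eq_empty_or_nonempty with rfl | h
  · simp [auxW]
  · exact (auxW_sum C h).le

lemma aux_hit_local (S : Finset V) (J : Fin n' → Prop) (tb : Fin n' → Bool) (i : ℕ) (b : ℝ)
    (t : Fin n') (s : ℕ) (hs : s < t) (c : Fin n' → V × V) (x : V × V) :
    auxHit S J tb i b s (Function.update c t x) ↔ auxHit S J tb i b s c := by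
  have hl := aux_loads_local c tb t x s hs.le
  have hne : ∀ h : s < n', (⟨s, h⟩ : Fin n') ≠ t := by
    intro h e
    have := congrArg Fin.val e
    simp at this; omega
  unfold auxHit auxNu
  simp only [hl]
  constructor
  · rintro ⟨h, h1⟩
    rw [Function.update_of_ne (hne h)] at h1
    exact ⟨h, h1⟩
  · rintro ⟨h, h1⟩
    refine ⟨h, ?_⟩
    rw [Function.update_of_ne (hne h)]
    exact h1

lemma aux_moment (C : Fin n' → Finset V) (hC : ∀ t, (C t).Nonempty) (S : Finset V)
    (J : Fin n' → Prop) [DecidablePred J] (hJ : ∀ t, J t → C t = S) (tb : Fin n' → Bool) (i : ℕ) (b : ℝ)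
    (hb0 : 0 ≤ b) (θ : ℝ) (hθ : 0 ≤ θ) :
    ∑ c : Fin n' → V × V, (∏ t, auxW (C t) (c t)) *
        Real.exp (θ * (auxCnt S J tb i b n' c : ℝ)) ≤
      Real.exp ((Real.exp θ - 1) * (b / S.card) ^ 2 * (Finset.univ.filter J).card) := by
  have hz : 1 ≤ Real.exp θ := Real.one_le_exp hθ
  set q : ℝ := (Real.exp θ - 1) * (b / S.card) ^ 2 with hq
  have hq0 : 0 ≤ q := mul_nonneg (by linarith) (sq_nonneg _)
  let g : ℕ → (Fin n' → V × V) → ℝ := fun s c => if auxHit S J tb i b s c then Real.exp θ else 1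
  let B : ℕ → ℝ := fun s => if ∃ h : s < n', J ⟨s, h⟩ then Real.exp q else 1
  have hexp : ∀ c, Real.exp (θ * (auxCnt S J tb i b n' c : ℝ)) =
      ∏ s ∈ Finset.range n', g s c := by
    intro c
    unfold auxCnt
    push_cast
    rw [Finset.mul_sum, Real.exp_sum]
    apply Finset.prod_congr rfl
    intro s _
    simp only [g]
    split_ifs <;> simp
  simp only [hexp]
  have hBp : ∏ s ∈ Finset.range n', B s = Real.exp (q * (Finset.univ.filter J).card) := by
    rw [Finset.prod_range, Finset.card_filter]
    push_cast
    rw [Finset.mul_sum, Real.exp_sum]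
    apply Finset.prod_congr rfl
    intro t _
    simp only [B]
    by_cases h : J t
    · rw [if_pos ⟨t.2, h⟩, if_pos h, mul_one]
    · rw [if_neg, if_neg h, mul_zero, Real.exp_zero]
      rintro ⟨_, h'⟩; exact h h'
  rw [← hBp]
  apply aux_adaptive (fun t => auxW (C t)) (fun t x => auxW_nonneg _ _)
    (fun t => auxW_sum _ (hC t)) g
  · intro t c; simp only [g]; split_ifs <;> positivity
  · intro t s hs c x
    simp only [g]
    rw [if_congr (aux_hit_local S J tb i b t s hs c x) rfl rfl]
  · intro t; simp only [B]; split_ifs <;> positivity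
  · intro t c
    have hl := fun x => aux_loads_local c tb t x t le_rfl
    by_cases h : J t ∧ (auxNu S c tb i t : ℝ) ≤ b
    · have hBt : B t = Real.exp q := by
        simp only [B]; rw [if_pos ⟨t.2, h.1⟩]
      rw [hBt]
      set H := S.filter (fun v => i ≤ loadsUpTo c tb t v) with hH
      have hsub : H ⊆ C t := by rw [hJ t h.1]; exact Finset.filter_subset _ _
      have hterm : ∀ x, auxW (C t) x * g t (Function.update c t x) ≤
          auxW (C t) x + (Real.exp θ - 1) * (if x.1 ∈ H ∧ x.2 ∈ H then auxW (C t) x else 0) := by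
        intro x
        by_cases hx : x.1 ∈ C t ∧ x.2 ∈ C t
        · simp only [g]
          split_ifs with h1 h2 h2
          · apply le_of_eq; ring
          · exfalso
            apply h2
            obtain ⟨_, _, h3, h4, _⟩ := h1
            simp only [hl, Fin.eta, Function.update_self] at h3 h4
            rw [hJ t h.1] at hx
            simp only [hH, Finset.mem_filter]
            exact ⟨⟨hx.1, h3⟩, ⟨hx.2, h4⟩⟩
          · have := mul_nonneg (sub_nonneg.2 hz) (auxW_nonneg (C t) x)
            linarith
          · simp
        · have : auxW (C t) x = 0 := by unfold auxW; rw [if_neg hx]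
          rw [this]; simp
      calc _ ≤ ∑ x, (auxW (C t) x + (Real.exp θ - 1) *
            (if x.1 ∈ H ∧ x.2 ∈ H then auxW (C t) x else 0)) :=
              Finset.sum_le_sum fun x _ => hterm x
        _ = 1 + (Real.exp θ - 1) * ((H.card : ℝ) / S.card) ^ 2 := by
            rw [Finset.sum_add_distrib, auxW_sum _ (hC t), ← Finset.mul_sum,
              auxW_sum_sub _ _ hsub, hJ t h.1]
        _ ≤ 1 + q := by
            have : (H.card : ℝ) ≤ b := h.2
            have h5 : ((H.card : ℝ) / S.card) ^ 2 ≤ (b / S.card) ^ 2 :=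
              pow_le_pow_left₀ (div_nonneg (Nat.cast_nonneg _) (Nat.cast_nonneg _))
                (div_le_div_of_nonneg_right this (Nat.cast_nonneg _)) 2
            have h6 := mul_le_mul_of_nonneg_left h5 (sub_nonneg.2 hz)
            linarith
        _ ≤ _ := by linarith [Real.add_one_le_exp q]
    · have hB1 : 1 ≤ B t := by
        simp only [B]; split_ifs
        · exact Real.one_le_exp hq0
        · exact le_rfl
      have : ∀ x, g t (Function.update c t x) = 1 := by
        intro x
        simp only [g]
        rw [if_neg]
        rintro ⟨_, h1, _, _, h2⟩
        unfold auxNu at h2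
        rw [hl] at h2
        exact h ⟨h1, h2⟩
      simp only [this, mul_one]
      rw [auxW_sum _ (hC t)]
      exact hB1

lemma aux_tail (C : Fin n' → Finset V) (hC : ∀ t, (C t).Nonempty) (S : Finset V)
    (J : Fin n' → Prop) [DecidablePred J] (hJ : ∀ t, J t → C t = S) (tb : Fin n' → Bool) (i : ℕ) (b : ℝ)
    (hb0 : 0 ≤ b) (θ : ℝ) (hθ : 0 ≤ θ) (a : ℝ) :
    ∑ c : Fin n' → V × V, (∏ t, auxW (C t) (c t)) *
        (if a ≤ (auxCnt S J tb i b n' c : ℝ) then 1 else 0) ≤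
      Real.exp ((Real.exp θ - 1) * (b / S.card) ^ 2 * (Finset.univ.filter J).card - θ * a) := by
  have h := aux_moment C hC S J hJ tb i b hb0 θ hθ
  rw [Real.exp_sub, le_div_iff₀ (Real.exp_pos _)]
  refine le_trans ?_ h
  rw [Finset.sum_mul]
  apply Finset.sum_le_sum
  intro c _
  rw [mul_assoc]
  apply mul_le_mul_of_nonneg_left _ (Finset.prod_nonneg fun t _ => auxW_nonneg _ _)
  split_ifs with h1
  · rw [one_mul]
    exact Real.exp_le_exp.2 (mul_le_mul_of_nonneg_left h1 hθ)
  · rw [zero_mul]; positivity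

/-- layered induction for one file -/
lemma aux_layer (C : Fin n' → Finset V) (hC : ∀ t, (C t).Nonempty) (S : Finset V)
    (J : Fin n' → Prop) [DecidablePred J] (hJ : ∀ t, J t → C t = S) (hJ' : ∀ t, ¬ J t → Disjoint (C t) S)
    (tb : Fin n' → Bool)
    (μ : ℝ) (hμ : 2 ^ 20 ≤ μ) (hR : ((Finset.univ.filter J).card : ℝ) ≤ 4 * μ)
    (hN : μ / 4 ≤ S.card) (k T : ℕ) (hT : μ ≤ 2 ^ 2 ^ T) :
    ∑ c : Fin n' → V × V, (∏ t, auxW (C t) (c t)) *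
        (if ∃ v ∈ S, 2048 + T + k < loadsUpTo c tb n' v then 1 else 0) ≤
      T * Real.exp (- μ ^ (2 / 5 : ℝ) / 2) + Real.exp 64 * μ ^ (-(k : ℝ) / 5) := by
  have hμ0 : 0 < μ := by linarith
  have hμ1 : 1 ≤ μ := by linarith
  set d : ℝ := μ ^ (2 / 5 : ℝ) with hd
  have hd0 : 0 < d := Real.rpow_pos_of_pos hμ0 _
  have hd3 : 256 * d ^ 2 / μ ≤ d := by
    have h1 : d * μ ^ (3 / 5 : ℝ) = μ := by
      rw [hd, ← Real.rpow_add hμ0]; norm_num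
    have h2 : 256 ≤ μ ^ (3 / 5 : ℝ) := by
      calc (256 : ℝ) ≤ ((2:ℝ) ^ (20:ℕ)) ^ (3 / 5 : ℝ) := by
            rw [← Real.rpow_natCast, ← Real.rpow_mul (by norm_num)]
            norm_num
        _ ≤ _ := Real.rpow_le_rpow (by norm_num) hμ (by norm_num)
    rw [div_le_iff₀ hμ0]
    calc 256 * d ^ 2 ≤ μ ^ (3 / 5 : ℝ) * d ^ 2 := by gcongr
      _ = d * (d * μ ^ (3 / 5 : ℝ)) := by ring
      _ = _ := by rw [h1]
  let b : ℕ → ℝ := fun s => max (μ * (1 / 2) ^ 2 ^ s / 256) d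
  have hb0 : ∀ s, 0 ≤ b s := fun s => le_max_of_le_right hd0.le
  have hbd : ∀ s, d ≤ b s := fun s => le_max_right _ _
  have hbs : ∀ s, 256 * b s ^ 2 / μ ≤ b (s + 1) := by
    intro s
    rcases le_total (μ * (1 / 2) ^ 2 ^ s / 256) d with h | h
    · have : b s = d := max_eq_right h
      rw [this]; exact hd3.trans (hbd _)
    · have : b s = μ * (1 / 2) ^ 2 ^ s / 256 := max_eq_left h
      rw [this]
      apply le_max_of_le_left
      apply le_of_eq
      rw [pow_succ 2 s, pow_mul]
      field_simp
      try norm_num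
  have hbT : b T = d := by
    apply max_eq_right
    rw [one_div, inv_pow]
    have h1 : μ * ((2:ℝ) ^ 2 ^ T)⁻¹ ≤ 1 := by
      rw [← div_eq_mul_inv, div_le_one (by positivity)]; exact hT
    have h2 : 1 ≤ d := Real.one_le_rpow hμ1 (by norm_num)
    linarith
  have hSpos : (0:ℝ) < S.card := lt_of_lt_of_le (by positivity) hN
  have hqR : ∀ x : ℝ, 0 ≤ x →
      (x / S.card) ^ 2 * (Finset.univ.filter J).card ≤ 64 * x ^ 2 / μ := by
    intro x hx
    calc (x / S.card) ^ 2 * (Finset.univ.filter J).card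
        ≤ (x / (μ / 4)) ^ 2 * (4 * μ) := by gcongr
      _ = _ := by field_simp; norm_num
  -- bad events
  let bad : ℕ → (Fin n' → V × V) → Prop := fun s c =>
    b (s + 1) ≤ (auxCnt S J tb (2048 + s) (b s) n' c : ℝ)
  let fin : (Fin n' → V × V) → Prop := fun c =>
    (k : ℝ) ≤ (auxCnt S J tb (2048 + T) (b T) n' c : ℝ)
  have hbad : ∀ s, ∑ c : Fin n' → V × V, (∏ t, auxW (C t) (c t)) *
      (if bad s c then 1 else 0) ≤ Real.exp (-d / 2) := by
    intro s
    refine (aux_tail C hC S J hJ tb (2048 + s) (b s) (hb0 s) 1 zero_le_one (b (s+1))).trans ?_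
    apply Real.exp_le_exp.2
    have h1 := hqR (b s) (hb0 s)
    have h2 := hbs s
    have h3 : Real.exp 1 - 1 ≤ 2 := by linarith [Real.exp_one_lt_d9]
    have h4 : (Real.exp 1 - 1) * (b s / S.card) ^ 2 * (Finset.univ.filter J).card ≤
        2 * (64 * b s ^ 2 / μ) := by
      rw [mul_assoc]
      apply mul_le_mul h3 h1 (by positivity) (by norm_num)
    have h5 := hbd (s+1)
    have h6 : 256 * b s ^ 2 / μ = 4 * (64 * b s ^ 2 / μ) := by ring
    linarith
  have hfin : ∑ c : Fin n' → V × V, (∏ t, auxW (C t) (c t)) *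
      (if fin c then 1 else 0) ≤ Real.exp 64 * μ ^ (-(k : ℝ) / 5) := by
    have hlog : 0 ≤ Real.log μ := Real.log_nonneg hμ1
    refine (aux_tail C hC S J hJ tb (2048 + T) (b T) (hb0 T) (Real.log μ / 5) (by positivity)
      k).trans ?_
    have h1 := hqR (b T) (hb0 T)
    have he : Real.exp (Real.log μ / 5) = μ ^ (1/5 : ℝ) := by
      rw [Real.rpow_def_of_pos hμ0]; congr 1; ring
    have h2 : (Real.exp (Real.log μ / 5) - 1) * (b T / S.card) ^ 2 *
        (Finset.univ.filter J).card ≤ 64 := by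
      rw [mul_assoc]
      calc _ ≤ μ ^ (1/5 : ℝ) * (64 * b T ^ 2 / μ) := by
            apply mul_le_mul _ h1 (by positivity) (by positivity)
            linarith [he]
        _ = 64 := by
            rw [hbT]
            have : μ ^ (1/5 : ℝ) * d ^ 2 = μ := by
              rw [hd, ← Real.rpow_natCast, ← Real.rpow_mul hμ0.le, ← Real.rpow_add hμ0]
              norm_num
            rw [div_eq_mul_inv]
            calc _ = 64 * (μ ^ (1/5 : ℝ) * d ^ 2) * μ⁻¹ := by ring
              _ = _ := by rw [this]; field_simp
    have h3 : μ ^ (-(k : ℝ) / 5) = Real.exp (- (Real.log μ / 5 * k)) := by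
      rw [Real.rpow_def_of_pos hμ0]; congr 1; ring
    rw [h3, ← Real.exp_add]
    apply Real.exp_le_exp.2
    linarith
  -- deterministic implication
  have hdet : ∀ c : Fin n' → V × V, (∀ t, (c t).1 ∈ C t ∧ (c t).2 ∈ C t) →
      (∀ s < T, ¬ bad s c) → ¬ fin c → ∀ v ∈ S, loadsUpTo c tb n' v ≤ 2048 + T + k := by
    intro c hc hnb hnf v hv
    have hJc : ∀ t, ¬ J t → (c t).1 ∉ S ∧ (c t).2 ∉ S := fun t ht =>
      ⟨Finset.disjoint_left.1 (hJ' t ht) (hc t).1, Finset.disjoint_left.1 (hJ' t ht) (hc t).2⟩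
    have hnu : ∀ s ≤ T, (auxNu S c tb (2048 + s) n' : ℝ) ≤ b s := by
      intro s
      induction s with
      | zero =>
        intro _
        have h1 := (aux_nu_mul_le S c tb 2048 n').trans (aux_total_le S J c tb hJc)
        have h2 : (2048 : ℝ) * (auxNu S c tb 2048 n' : ℝ) ≤ 4 * μ :=
          le_trans (by exact_mod_cast h1) hR
        apply le_max_of_le_left
        norm_num
        linarith
      | succ s ih =>
        intro hs
        have h1 := aux_excess_le S J c tb hJc (2048 + s) (b s) (ih (by omega)) n' le_rfl
        have h2 := (aux_nu_succ_le S c tb (2048 + s) n').trans h1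
        have h3 : ¬ bad s c := hnb s (by omega)
        have h4 := not_le.1 h3
        have h5 : (auxNu S c tb (2048 + (s + 1)) n' : ℝ) ≤
            (auxCnt S J tb (2048 + s) (b s) n' c : ℝ) := by exact_mod_cast h2
        linarith
    have h1 := aux_excess_le S J c tb hJc (2048 + T) (b T) (hnu T le_rfl) n' le_rfl
    have h2 : auxCnt S J tb (2048 + T) (b T) n' c < k := by
      have := not_le.1 hnf
      exact_mod_cast this
    have h3 : loadsUpTo c tb n' v - (2048 + T) ≤
        ∑ v ∈ S, (loadsUpTo c tb n' v - (2048 + T)) :=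
      Finset.single_le_sum (f := fun v => loadsUpTo c tb n' v - (2048 + T))
        (fun _ _ => Nat.zero_le _) hv
    omega
  -- conclusion
  calc ∑ c : Fin n' → V × V, (∏ t, auxW (C t) (c t)) *
        (if ∃ v ∈ S, 2048 + T + k < loadsUpTo c tb n' v then 1 else 0)
      ≤ ∑ c : Fin n' → V × V, (∑ s ∈ Finset.range T, (∏ t, auxW (C t) (c t)) *
          (if bad s c then 1 else 0) + (∏ t, auxW (C t) (c t)) * (if fin c then 1 else 0)) := by
        apply Finset.sum_le_sum
        intro c _
        have hW : 0 ≤ ∏ t, auxW (C t) (c t) := Finset.prod_nonneg fun t _ => auxW_nonneg _ _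
        rw [← Finset.mul_sum, ← mul_add]
        by_cases hc : ∀ t, (c t).1 ∈ C t ∧ (c t).2 ∈ C t
        · apply mul_le_mul_of_nonneg_left _ hW
          have hs0 : (0:ℝ) ≤ ∑ s ∈ Finset.range T, (if bad s c then (1:ℝ) else 0) :=
            Finset.sum_nonneg fun s _ => by split_ifs <;> norm_num
          have hf0 : (0:ℝ) ≤ if fin c then (1:ℝ) else 0 := by split_ifs <;> norm_num
          by_cases hv : ∃ v ∈ S, 2048 + T + k < loadsUpTo c tb n' v
          · rw [if_pos hv]
            by_cases hf : fin c
            · rw [if_pos hf]; linarith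
            · have : ∃ s < T, bad s c := by
                by_contra hcon
                push Not at hcon
                obtain ⟨v, hvS, hv⟩ := hv
                exact absurd (hdet c hc hcon hf v hvS) (by omega)
              obtain ⟨s, hs, hbs'⟩ := this
              have h1 := Finset.single_le_sum
                (f := fun s => if bad s c then (1:ℝ) else 0)
                (fun s _ => by split_ifs <;> norm_num) (Finset.mem_range.2 hs)
              simp only [if_pos hbs'] at h1
              linarith
          · rw [if_neg hv]; linarith
        · push Not at hc
          obtain ⟨t, ht⟩ := hc
          have : ∏ t, auxW (C t) (c t) = 0 := by
            apply Finset.prod_eq_zero (Finset.mem_univ t)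
            unfold auxW
            rw [if_neg]
            rintro ⟨h1, h2⟩
            exact ht h1 h2
          rw [this]; simp
    _ = ∑ s ∈ Finset.range T, ∑ c : Fin n' → V × V, (∏ t, auxW (C t) (c t)) *
          (if bad s c then 1 else 0) +
        ∑ c : Fin n' → V × V, (∏ t, auxW (C t) (c t)) * (if fin c then 1 else 0) := by
        rw [Finset.sum_add_distrib, Finset.sum_comm]
    _ ≤ ∑ s ∈ Finset.range T, Real.exp (-d / 2) + Real.exp 64 * μ ^ (-(k : ℝ) / 5) :=
        add_le_add (Finset.sum_le_sum fun s _ => hbad s) hfin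
    _ = _ := by rw [Finset.sum_const, Finset.card_range, nsmul_eq_mul]

end moment

/-! ### Chernoff bounds for i.i.d. samples -/

section iid
variable {ι X : Type*} [Fintype ι] [DecidableEq ι] [Fintype X]

lemma aux_iid_one (w : X → ℝ) (hw1 : ∑ x, w x = 1) :
    ∑ f : ι → X, ∏ i, w (f i) = 1 := by
  have := Fintype.prod_sum (fun (_ : ι) (x : X) => w x)
  rw [← this]
  simp [hw1]

lemma aux_iid_moment (w : X → ℝ) (hw0 : ∀ x, 0 ≤ w x) (hw1 : ∑ x, w x = 1) (P : X → Prop) [DecidablePred P]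
    (θ : ℝ) :
    ∑ f : ι → X, (∏ i, w (f i)) *
        Real.exp (θ * ((Finset.univ.filter fun i => P (f i)).card : ℝ)) ≤
      Real.exp ((Real.exp θ - 1) * ((∑ x, if P x then w x else 0) * Fintype.card ι)) := by
  set π : ℝ := ∑ x, if P x then w x else 0 with hπ
  have h1 : ∀ f : ι → X, (∏ i, w (f i)) *
        Real.exp (θ * ((Finset.univ.filter fun i => P (f i)).card : ℝ)) =
      ∏ i, (w (f i) * if P (f i) then Real.exp θ else 1) := by
    intro f
    rw [Finset.prod_mul_distrib]
    congr 1
    rw [Finset.card_filter]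
    push_cast
    rw [Finset.mul_sum, Real.exp_sum]
    apply Finset.prod_congr rfl
    intro i _
    split_ifs <;> simp
  simp only [h1]
  have h2 := Fintype.prod_sum (fun (_ : ι) (x : X) => w x * if P x then Real.exp θ else 1)
  rw [← h2]
  have h3 : ∑ x, (w x * if P x then Real.exp θ else 1) = 1 + (Real.exp θ - 1) * π := by
    have h3' : 1 + (Real.exp θ - 1) * π = ∑ x, w x + (Real.exp θ - 1) * π := by rw [hw1]
    rw [h3', hπ, Finset.mul_sum, ← Finset.sum_add_distrib]
    apply Finset.sum_congr rfl
    intro x _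
    split_ifs <;> ring
  have h4 : 0 ≤ ∑ x, (w x * if P x then Real.exp θ else 1) :=
    Finset.sum_nonneg fun x _ => mul_nonneg (hw0 x) (by split_ifs <;> positivity)
  rw [Finset.prod_const, Finset.card_univ]
  calc (∑ x, (w x * if P x then Real.exp θ else 1)) ^ Fintype.card ι
      ≤ (Real.exp ((Real.exp θ - 1) * π)) ^ Fintype.card ι := by
        apply pow_le_pow_left₀ h4
        rw [h3]
        linarith [Real.add_one_le_exp ((Real.exp θ - 1) * π)]
    _ = _ := by rw [← Real.exp_nat_mul]; congr 1; ring

lemma aux_iid_markov (w : X → ℝ) (hw0 : ∀ x, 0 ≤ w x) (hw1 : ∑ x, w x = 1) (P : X → Prop) [DecidablePred P]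
    (θ a : ℝ) (Q : ℕ → Prop) (hQ : ∀ N, Q N → θ * a ≤ θ * (N : ℝ)) :
    ∑ f : ι → X, (∏ i, w (f i)) *
        (if Q (Finset.univ.filter fun i => P (f i)).card then 1 else 0) ≤
      Real.exp ((Real.exp θ - 1) * ((∑ x, if P x then w x else 0) * Fintype.card ι) - θ * a) := by
  rw [Real.exp_sub, le_div_iff₀ (Real.exp_pos _)]
  refine le_trans ?_ (aux_iid_moment w hw0 hw1 P θ)
  rw [Finset.sum_mul]
  apply Finset.sum_le_sum
  intro f _
  rw [mul_assoc]
  apply mul_le_mul_of_nonneg_left _ (Finset.prod_nonneg fun t _ => hw0 _)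
  split_ifs with h1
  · rw [one_mul]
    exact Real.exp_le_exp.2 (hQ _ h1)
  · rw [zero_mul]; positivity

lemma aux_iid_upper (w : X → ℝ) (hw0 : ∀ x, 0 ≤ w x) (hw1 : ∑ x, w x = 1) (P : X → Prop) [DecidablePred P]
    (μ : ℝ) (hμ0 : 0 ≤ μ) (hμ : (∑ x, if P x then w x else 0) * Fintype.card ι = μ) :
    ∑ f : ι → X, (∏ i, w (f i)) *
        (if 4 * μ < ((Finset.univ.filter fun i => P (f i)).card : ℝ) then 1 else 0) ≤
      Real.exp (-μ / 4) := by
  refine (aux_iid_markov w hw0 hw1 P 1 (4 * μ) (fun N => 4 * μ < (N : ℝ))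
    (fun N h => by linarith)).trans ?_
  apply Real.exp_le_exp.2
  rw [hμ]
  have h3 : Real.exp 1 - 1 ≤ 2 := by linarith [Real.exp_one_lt_d9]
  have := mul_le_mul_of_nonneg_right h3 hμ0
  linarith

lemma aux_iid_lower (w : X → ℝ) (hw0 : ∀ x, 0 ≤ w x) (hw1 : ∑ x, w x = 1) (P : X → Prop) [DecidablePred P]
    (μ : ℝ) (hμ0 : 0 ≤ μ) (hμ : (∑ x, if P x then w x else 0) * Fintype.card ι = μ) :
    ∑ f : ι → X, (∏ i, w (f i)) *
        (if ((Finset.univ.filter fun i => P (f i)).card : ℝ) < μ / 4 then 1 else 0) ≤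
      Real.exp (-μ / 4) := by
  refine (aux_iid_markov w hw0 hw1 P (-1) (μ / 4) (fun N => (N : ℝ) < μ / 4)
    (fun N h => by linarith)).trans ?_
  apply Real.exp_le_exp.2
  rw [hμ]
  have h3 : Real.exp (-1) - 1 ≤ -1/2 := by linarith [Real.exp_neg_one_lt_d9]
  have := mul_le_mul_of_nonneg_right h3 hμ0
  linarith

end iid

/-! ### Numerical estimates -/

lemma aux_num (c : ℝ) (k : ℕ) (hk : 5 * c ≤ k) :
    ∃ μ0 : ℝ, 2 ^ 20 ≤ μ0 ∧ ∀ μ, μ0 ≤ μ →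
      2 * Real.exp (-μ / 4) + ((Nat.clog 2 (Nat.clog 2 ⌈μ⌉₊) : ℕ) : ℝ) *
        Real.exp (- μ ^ (2 / 5 : ℝ) / 2) + Real.exp 64 * μ ^ (-(k : ℝ) / 5) ≤
      (4 + Real.exp 64) * μ ^ (-c) := by
  have t1 := tendsto_rpow_mul_exp_neg_mul_atTop_nhds_zero c (1/4) (by norm_num)
  have t2 := (tendsto_rpow_mul_exp_neg_mul_atTop_nhds_zero ((c+1) * (5/2)) (1/2)
    (by norm_num)).comp (tendsto_rpow_atTop (show (0:ℝ) < 2/5 by norm_num))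
  have e1 := t1.eventually (gt_mem_nhds (show (0:ℝ) < 1 by norm_num))
  have e2 := t2.eventually (gt_mem_nhds (show (0:ℝ) < 1 by norm_num))
  obtain ⟨μ0, h⟩ := Filter.eventually_atTop.1 (e1.and e2)
  refine ⟨max μ0 (2^20), le_max_right _ _, ?_⟩
  intro μ hμ
  obtain ⟨h1, h2⟩ := h μ ((le_max_left _ _).trans hμ)
  have hμ20 : (2:ℝ)^20 ≤ μ := (le_max_right _ _).trans hμ
  have hμ0 : 0 < μ := lt_of_lt_of_le (by norm_num) hμ20
  have hμ1 : 1 ≤ μ := le_trans (by norm_num) hμ20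
  have hc : μ ^ (-c) = (μ ^ c)⁻¹ := Real.rpow_neg hμ0.le c
  have hcp : 0 < μ ^ c := Real.rpow_pos_of_pos hμ0 c
  have b1 : Real.exp (-μ / 4) ≤ μ ^ (-c) := by
    rw [hc, ← one_div, le_div_iff₀ hcp]
    have : -(1/4) * μ = -μ/4 := by ring
    rw [this] at h1
    linarith
  have b2 : μ * Real.exp (- μ ^ (2 / 5 : ℝ) / 2) ≤ μ ^ (-c) := by
    rw [hc, ← one_div, le_div_iff₀ hcp]
    simp only [Function.comp] at h2
    rw [← Real.rpow_mul hμ0.le] at h2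
    have e3 : (2/5 : ℝ) * ((c+1) * (5/2)) = c + 1 := by ring
    rw [e3, Real.rpow_add hμ0, Real.rpow_one] at h2
    have e4 : -(1/2) * μ ^ (2/5 : ℝ) = - μ ^ (2 / 5 : ℝ) / 2 := by ring
    rw [e4] at h2
    linarith
  have b3 : μ ^ (-(k : ℝ) / 5) ≤ μ ^ (-c) :=
    Real.rpow_le_rpow_of_exponent_le hμ1 (by linarith)
  have b4 : ((Nat.clog 2 (Nat.clog 2 ⌈μ⌉₊) : ℕ) : ℝ) ≤ 2 * μ := by
    have hcl : ∀ x : ℕ, Nat.clog 2 x ≤ x := fun x =>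
      Nat.clog_le_of_le_pow (Nat.lt_two_pow_self).le
    have h5 : ((Nat.clog 2 (Nat.clog 2 ⌈μ⌉₊) : ℕ) : ℝ) ≤ (⌈μ⌉₊ : ℝ) := by
      exact_mod_cast (hcl _).trans (hcl _)
    have := Nat.ceil_lt_add_one hμ0.le
    linarith
  have b5 := mul_le_mul_of_nonneg_right b4 (Real.exp_pos (- μ ^ (2 / 5 : ℝ) / 2)).le
  have b6 := mul_le_mul_of_nonneg_left b3 (Real.exp_pos 64).le
  nlinarith

lemma aux_clog_le (x : ℕ) (hx : 1 ≤ x) : ((Nat.clog 2 x : ℕ) : ℝ) ≤ 2 * Real.log x + 1 := by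
  rw [← Real.natCeil_logb_natCast]
  have hx1 : (1:ℝ) ≤ x := by exact_mod_cast hx
  have h0 : 0 ≤ Real.log x := Real.log_nonneg hx1
  have hl : 1/2 < Real.log 2 := by linarith [Real.log_two_gt_d9]
  have h1 : Real.logb 2 x ≤ 2 * Real.log x := by
    unfold Real.logb
    rw [div_le_iff₀ (by linarith)]
    nlinarith
  have h2 : 0 ≤ Real.logb 2 x := Real.logb_nonneg (by norm_num) hx1
  have := (Nat.ceil_lt_add_one h2).le
  push_cast
  linarith

lemma aux_loglog (k : ℕ) : ∀ᶠ n : ℕ in atTop,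
    (2048 : ℝ) + ((Nat.clog 2 (Nat.clog 2 n) : ℕ) : ℝ) + k ≤
      (2055 + k) * Real.log (Real.log (n : ℝ)) := by
  have t : Tendsto (fun n : ℕ => Real.log (Real.log (n : ℝ))) atTop atTop :=
    Real.tendsto_log_atTop.comp (Real.tendsto_log_atTop.comp tendsto_natCast_atTop_atTop)
  have t2 : Tendsto (fun n : ℕ => Real.log (n : ℝ)) atTop atTop :=
    (Real.tendsto_log_atTop.comp tendsto_natCast_atTop_atTop)
  filter_upwards [t.eventually_ge_atTop 1, t2.eventually_ge_atTop 1,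
    Filter.eventually_ge_atTop 2] with n h1 h2 h3
  have hc1 : 1 ≤ Nat.clog 2 n := Nat.clog_pos (by norm_num) h3
  have a1 := aux_clog_le _ hc1
  have a2 := aux_clog_le n (by omega)
  have a3 : Real.log (Nat.clog 2 n : ℕ) ≤ Real.log 3 + Real.log (Real.log (n : ℝ)) := by
    rw [← Real.log_mul (by norm_num) (by linarith)]
    apply Real.log_le_log
    · exact_mod_cast hc1
    · linarith
  have a4 : Real.log 3 ≤ 2 := by
    have := Real.log_le_sub_one_of_pos (show (0:ℝ) < 3 by norm_num)
    linarith
  have hk : (0:ℝ) ≤ k := Nat.cast_nonneg k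
  nlinarith

/-! ### Assembling the probability space -/

/-- nodes caching file `j` -/
noncomputable def auxC {m K : ℕ} (ω : Placement m 1 K) (j : Fin K) : Finset (Node m) :=
  Finset.univ.filter fun v => ω v 0 = j

lemma aux_candSet {m K : ℕ} (ω : Placement m 1 K) (u : Node m) (j : Fin K) :
    candSet ω u j (2 * m) = auxC ω j := by
  unfold candSet auxC
  ext v
  simp only [Finset.mem_filter, Finset.mem_univ, true_and]
  have hm : 0 < m := u.1.pos
  have hc : ∀ a b : Fin m, cdist a b ≤ m := fun a b =>
    (min_le_left _ _).trans (Nat.mod_lt _ hm).le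
  have hd : torusDist u v ≤ 2 * m := by
    unfold torusDist
    have := hc u.1 v.1
    have := hc u.2 v.2
    omega
  constructor
  · rintro ⟨⟨i, hi⟩, _⟩
    rw [← hi, Subsingleton.elim i 0]
  · intro h
    exact ⟨⟨0, h⟩, hd⟩

lemma aux_prob_eq (m K n' : ℕ) (p : Fin K → ℝ) (E : Set (SampleII m 1 K n')) :
    probIIP m 1 K (2 * m) n' p E =
      ∑ ω : Placement m 1 K, (∏ u : Node m, ∏ i : Fin 1, p (ω u i)) *
        ∑ req : Fin n' → Node m × Fin K,
          (∏ t, ((1 / ((m ^ 2 : ℕ) : ℝ)) * p (req t).2)) *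
          ∑ tb : Fin n' → Bool, (1 / 2 ^ n') *
            ∑ c : Fin n' → Node m × Node m, (∏ t, auxW (auxC ω (req t).2) (c t)) *
              (if (ω, req, c, tb) ∈ E then 1 else 0) := by
  unfold probIIP
  rw [Finset.sum_filter, Fintype.sum_prod_type]
  apply Finset.sum_congr rfl
  intro ω _
  rw [Fintype.sum_prod_type, Finset.mul_sum]
  apply Finset.sum_congr rfl
  intro req _
  rw [Fintype.sum_prod_type, Finset.sum_comm, Finset.mul_sum, Finset.mul_sum]
  apply Finset.sum_congr rfl
  intro tb _
  rw [Finset.mul_sum, Finset.mul_sum, Finset.mul_sum]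
  apply Finset.sum_congr rfl
  intro c _
  split_ifs with h
  · unfold weightIIP auxW
    simp only [aux_candSet]
    rw [Finset.prod_mul_distrib, Finset.prod_const, Finset.card_univ, Fintype.card_fin]
    ring
  · ring

set_option maxHeartbeats 2000000 in
lemma aux_prob_bounds (m K : ℕ) (hm : 1 ≤ m) (p : Fin K → ℝ) (hp0 : ∀ j, 0 ≤ p j)
    (hp1 : ∑ j, p j = 1) (k : ℕ) (T : Fin K → ℕ) (Lr : ℝ)
    (hμ : ∀ j, 0 < p j → 2 ^ 20 ≤ p j * ((m ^ 2 : ℕ) : ℝ) ∧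
      p j * ((m ^ 2 : ℕ) : ℝ) ≤ 2 ^ 2 ^ T j ∧ (2048 : ℝ) + (T j : ℝ) + k ≤ Lr) :
    1 - ∑ j ∈ Finset.univ.filter (fun j => 0 < p j),
        (2 * Real.exp (-(p j * ((m ^ 2 : ℕ) : ℝ)) / 4) +
          (T j : ℝ) * Real.exp (- (p j * ((m ^ 2 : ℕ) : ℝ)) ^ (2 / 5 : ℝ) / 2) +
          Real.exp 64 * (p j * ((m ^ 2 : ℕ) : ℝ)) ^ (-(k : ℝ) / 5)) ≤
      probIIP m 1 K (2 * m) (m ^ 2) p {x | (maxLoadII x.2.2.1 x.2.2.2 : ℝ) ≤ Lr} ∧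
    probIIP m 1 K (2 * m) (m ^ 2) p {x | (maxLoadII x.2.2.1 x.2.2.2 : ℝ) ≤ Lr} ≤ 1 := by
  set n : ℕ := m ^ 2 with hn
  have hn0 : 0 < n := by positivity
  have hnR : (0:ℝ) < (n : ℝ) := by exact_mod_cast hn0
  set μ : Fin K → ℝ := fun j => p j * (n : ℝ) with hμdef
  set P := Finset.univ.filter (fun j => 0 < p j) with hP
  set E : Set (SampleII m 1 K n) := {x | (maxLoadII x.2.2.1 x.2.2.2 : ℝ) ≤ Lr} with hE
  rw [aux_prob_eq]
  -- the three layers of weights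
  let w1 : (Fin 1 → Fin K) → ℝ := fun y => ∏ i, p (y i)
  let w2 : Node m × Fin K → ℝ := fun y => (1 / (n : ℝ)) * p y.2
  let W : Placement m 1 K → (Fin n → Node m × Fin K) → (Fin n → Node m × Node m) → ℝ :=
    fun ω req c => ∏ t, auxW (auxC ω (req t).2) (c t)
  let Q : Placement m 1 K → (Fin n → Node m × Fin K) → (Fin n → Bool) → ℝ :=
    fun ω req tb => ∑ c, W ω req c * (if (ω, req, c, tb) ∈ E then 1 else 0)
  let Q' : Placement m 1 K → (Fin n → Node m × Fin K) → ℝ :=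
    fun ω req => ∑ tb : Fin n → Bool, (1 / 2 ^ n) * Q ω req tb
  have hw10 : ∀ y, 0 ≤ w1 y := fun y => Finset.prod_nonneg fun i _ => hp0 _
  have hw20 : ∀ y, 0 ≤ w2 y := fun y => mul_nonneg (by positivity) (hp0 _)
  have hw11 : ∑ y, w1 y = 1 := aux_iid_one p hp1
  have hcardN : Fintype.card (Node m) = n := by
    simp [hn, sq]
  have hw21 : ∑ y, w2 y = 1 := by
    rw [Fintype.sum_prod_type]
    simp only [w2, ← Finset.mul_sum, hp1]
    rw [Finset.sum_const, Finset.card_univ, hcardN, nsmul_eq_mul]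
    field_simp
  have hW0 : ∀ ω req c, 0 ≤ W ω req c := fun ω req c =>
    Finset.prod_nonneg fun t _ => auxW_nonneg _ _
  have hWle : ∀ ω req, ∑ c, W ω req c ≤ 1 := by
    intro ω req
    have := Fintype.prod_sum (fun (t : Fin n) (x : Node m × Node m) => auxW (auxC ω (req t).2) x)
    simp only [W]
    rw [← this]
    exact Finset.prod_le_one (fun t _ => Finset.sum_nonneg fun x _ => auxW_nonneg _ _)
      (fun t _ => auxW_sum_le _)
  have hQ0 : ∀ ω req tb, 0 ≤ Q ω req tb := fun ω req tb =>
    Finset.sum_nonneg fun c _ => mul_nonneg (hW0 _ _ _) (by split_ifs <;> norm_num)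
  have hQ1 : ∀ ω req tb, Q ω req tb ≤ 1 := by
    intro ω req tb
    refine le_trans (Finset.sum_le_sum fun c _ => ?_) (hWle ω req)
    exact mul_le_of_le_one_right (hW0 _ _ _) (by split_ifs <;> norm_num)
  have htb : ∀ a : ℝ, ∑ _tb : Fin n → Bool, (1 / 2 ^ n : ℝ) * a = a := by
    intro a
    rw [Finset.sum_const, Finset.card_univ, Fintype.card_fun, Fintype.card_bool, Fintype.card_fin,
      nsmul_eq_mul]
    push_cast
    field_simp
  have hQ'1 : ∀ ω req, Q' ω req ≤ 1 := by
    intro ω req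
    rw [← htb 1]
    exact Finset.sum_le_sum fun tb _ => mul_le_mul_of_nonneg_left (hQ1 _ _ _) (by positivity)
  change _ ≤ ∑ ω : Placement m 1 K, (∏ u, w1 (ω u)) * ∑ req : Fin n → Node m × Fin K,
      (∏ t, w2 (req t)) * Q' ω req ∧ ∑ ω : Placement m 1 K, (∏ u, w1 (ω u)) *
      ∑ req : Fin n → Node m × Fin K, (∏ t, w2 (req t)) * Q' ω req ≤ 1
  have hA1 : ∑ ω : Placement m 1 K, ∏ u, w1 (ω u) = 1 := aux_iid_one w1 hw11
  have hA2 : ∑ req : Fin n → Node m × Fin K, ∏ t, w2 (req t) = 1 := aux_iid_one w2 hw21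
  have hA10 : ∀ ω : Placement m 1 K, 0 ≤ ∏ u, w1 (ω u) := fun ω =>
    Finset.prod_nonneg fun _ _ => hw10 _
  have hA20 : ∀ req : Fin n → Node m × Fin K, 0 ≤ ∏ t, w2 (req t) := fun req =>
    Finset.prod_nonneg fun _ _ => hw20 _
  constructor
  swap
  · calc _ ≤ ∑ ω : Placement m 1 K, (∏ u, w1 (ω u)) * ∑ req : Fin n → Node m × Fin K,
        (∏ t, w2 (req t)) * 1 := by
          apply Finset.sum_le_sum; intro ω _
          apply mul_le_mul_of_nonneg_left _ (hA10 ω)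
          apply Finset.sum_le_sum; intro req _
          exact mul_le_mul_of_nonneg_left (hQ'1 _ _) (hA20 req)
      _ = 1 := by simp only [mul_one, hA2, hA1]
  -- lower bound
  let B1 : Placement m 1 K → Fin K → ℝ := fun ω j =>
    if ((Finset.univ.filter fun u => ω u 0 = j).card : ℝ) < μ j / 4 then 1 else 0
  let B2 : (Fin n → Node m × Fin K) → Fin K → ℝ := fun req j =>
    if 4 * μ j < ((Finset.univ.filter fun t => (req t).2 = j).card : ℝ) then 1 else 0
  let δ : Fin K → ℝ := fun j => (T j : ℝ) * Real.exp (- (μ j) ^ (2 / 5 : ℝ) / 2) +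
          Real.exp 64 * (μ j) ^ (-(k : ℝ) / 5)
  have hμ0 : ∀ j, 0 ≤ μ j := fun j => mul_nonneg (hp0 j) hnR.le
  have hδ0 : ∀ j, 0 ≤ δ j := fun j => add_nonneg (by positivity)
    (mul_nonneg (Real.exp_pos _).le (Real.rpow_nonneg (hμ0 j) _))
  have hB10 : ∀ ω j, 0 ≤ B1 ω j := fun ω j => by simp only [B1]; split_ifs <;> norm_num
  have hB20 : ∀ req j, 0 ≤ B2 req j := fun req j => by simp only [B2]; split_ifs <;> norm_num
  have hB1 : ∀ j, ∑ ω : Placement m 1 K, (∏ u, w1 (ω u)) * B1 ω j ≤ Real.exp (-μ j / 4) := by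
    intro j
    apply aux_iid_lower w1 hw10 hw11 (fun y => y 0 = j) (μ j) (hμ0 j)
    rw [hcardN]
    congr 1
    rw [Fintype.sum_equiv (Equiv.funUnique (Fin 1) (Fin K)) _ (fun x => if x = j then p x else 0)]
    · simp
    · intro y
      simp [w1]
  have hB2 : ∀ j, ∑ req : Fin n → Node m × Fin K, (∏ t, w2 (req t)) * B2 req j ≤
      Real.exp (-μ j / 4) := by
    intro j
    apply aux_iid_upper w2 hw20 hw21 (fun y => y.2 = j) (μ j) (hμ0 j)
    rw [Fintype.card_fin, Fintype.sum_prod_type]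
    congr 1
    simp only [w2, Finset.sum_ite_eq', Finset.mem_univ, if_true]
    rw [Finset.sum_const, Finset.card_univ, hcardN, nsmul_eq_mul]
    field_simp
  have hmain : ∀ ω req, (∏ u, w1 (ω u)) * ((∏ t, w2 (req t)) *
      (1 - ∑ j ∈ P, δ j - ∑ j ∈ P, B1 ω j - ∑ j ∈ P, B2 req j)) ≤
      (∏ u, w1 (ω u)) * ((∏ t, w2 (req t)) * Q' ω req) := by
    intro ω req
    by_cases hz1 : (∏ u, w1 (ω u)) = 0
    · rw [hz1]; simp
    by_cases hz2 : (∏ t, w2 (req t)) = 0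
    · rw [hz2]; simp
    apply mul_le_mul_of_nonneg_left _ (hA10 ω)
    apply mul_le_mul_of_nonneg_left _ (hA20 req)
    rw [← htb (1 - ∑ j ∈ P, δ j - ∑ j ∈ P, B1 ω j - ∑ j ∈ P, B2 req j)]
    apply Finset.sum_le_sum
    intro tb _
    apply mul_le_mul_of_nonneg_left _ (by positivity)
    have hδs : 0 ≤ ∑ j ∈ P, δ j := Finset.sum_nonneg fun j _ => hδ0 j
    have hB1s : 0 ≤ ∑ j ∈ P, B1 ω j := Finset.sum_nonneg fun j _ => hB10 ω j
    have hB2s : 0 ≤ ∑ j ∈ P, B2 req j := Finset.sum_nonneg fun j _ => hB20 req j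
    by_cases hg1 : ∃ j ∈ P, B1 ω j = 1
    · obtain ⟨j, hj, h⟩ := hg1
      have := Finset.single_le_sum (f := fun j => B1 ω j) (fun j _ => hB10 ω j) hj
      simp only [h] at this
      linarith [hQ0 ω req tb]
    by_cases hg2 : ∃ j ∈ P, B2 req j = 1
    · obtain ⟨j, hj, h⟩ := hg2
      have := Finset.single_le_sum (f := fun j => B2 req j) (fun j _ => hB20 req j) hj
      simp only [h] at this
      linarith [hQ0 ω req tb]
    have hN : ∀ j ∈ P, μ j / 4 ≤ ((auxC ω j).card : ℝ) := by
      intro j hj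
      by_contra hcon
      apply hg1
      refine ⟨j, hj, ?_⟩
      simp only [B1]
      rw [if_pos]
      exact not_le.1 hcon
    have hR : ∀ j ∈ P, ((Finset.univ.filter fun t => (req t).2 = j).card : ℝ) ≤ 4 * μ j := by
      intro j hj
      by_contra hcon
      apply hg2
      refine ⟨j, hj, ?_⟩
      simp only [B2]
      rw [if_pos]
      exact not_le.1 hcon
    have hωP : ∀ u, ω u 0 ∈ P := by
      intro u
      have h1 := Finset.prod_ne_zero_iff.1 hz1 u (Finset.mem_univ u)
      simp only [w1] at h1
      have h2 := Finset.prod_ne_zero_iff.1 h1 0 (Finset.mem_univ _)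
      exact Finset.mem_filter.2 ⟨Finset.mem_univ _, lt_of_le_of_ne (hp0 _) (Ne.symm h2)⟩
    have hreqP : ∀ t, (req t).2 ∈ P := by
      intro t
      have h1 := Finset.prod_ne_zero_iff.1 hz2 t (Finset.mem_univ t)
      have h2 := right_ne_zero_of_mul h1
      exact Finset.mem_filter.2 ⟨Finset.mem_univ _, lt_of_le_of_ne (hp0 _) (Ne.symm h2)⟩
    have hμP : ∀ j ∈ P, 2 ^ 20 ≤ μ j ∧ μ j ≤ 2 ^ 2 ^ T j ∧ (2048 : ℝ) + (T j : ℝ) + k ≤ Lr :=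
      fun j hj => hμ j (Finset.mem_filter.1 hj).2
    have hCne : ∀ t, (auxC ω (req t).2).Nonempty := by
      intro t
      have h1 := hN _ (hreqP t)
      have h2 := (hμP _ (hreqP t)).1
      rw [← Finset.card_pos]
      have : (0:ℝ) < ((auxC ω (req t).2).card : ℝ) := by
        refine lt_of_lt_of_le ?_ h1
        have : (0:ℝ) < 2 ^ 20 := by norm_num
        linarith
      exact_mod_cast this
    have hW1 : ∑ c, W ω req c = 1 := by
      have := Fintype.prod_sum
        (fun (t : Fin n) (x : Node m × Node m) => auxW (auxC ω (req t).2) x)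
      simp only [W]
      rw [← this]
      exact Finset.prod_eq_one fun t _ => auxW_sum _ (hCne t)
    have hfile : ∀ j ∈ P, ∑ c, W ω req c *
        (if ∃ v ∈ auxC ω j, 2048 + T j + k < loadsUpTo c tb n v then 1 else 0) ≤ δ j := by
      intro j hj
      obtain ⟨h1, h2, h3⟩ := hμP j hj
      apply aux_layer (fun t => auxC ω (req t).2) hCne (auxC ω j) (fun t => (req t).2 = j)
        (fun t ht => by rw [ht]) _ tb (μ j) h1 (hR j hj) (hN j hj) k (T j) h2
      intro t ht
      rw [Finset.disjoint_left]
      intro v hv hv'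
      simp only [auxC, Finset.mem_filter, Finset.mem_univ, true_and] at hv hv'
      exact ht (hv.symm.trans hv')
    have hsplit : 1 ≤ Q ω req tb + ∑ j ∈ P, δ j := by
      calc (1:ℝ) = ∑ c, W ω req c := hW1.symm
        _ ≤ ∑ c, (W ω req c * (if (ω, req, c, tb) ∈ E then 1 else 0) + ∑ j ∈ P, W ω req c *
            (if ∃ v ∈ auxC ω j, 2048 + T j + k < loadsUpTo c tb n v then 1 else 0)) := by
            apply Finset.sum_le_sum
            intro c _
            rw [← Finset.mul_sum, ← mul_add]
            apply le_mul_of_one_le_right (hW0 _ _ _)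
            have hs0 : (0:ℝ) ≤ ∑ j ∈ P,
                (if ∃ v ∈ auxC ω j, 2048 + T j + k < loadsUpTo c tb n v then (1:ℝ) else 0) :=
              Finset.sum_nonneg fun s _ => by split_ifs <;> norm_num
            by_cases hEc : (ω, req, c, tb) ∈ E
            · rw [if_pos hEc]; linarith
            · rw [if_neg hEc]
              have : ∃ j ∈ P, ∃ v ∈ auxC ω j, 2048 + T j + k < loadsUpTo c tb n v := by
                by_contra hcon
                push Not at hcon
                apply hEc
                show (maxLoadII c tb : ℝ) ≤ Lr
                unfold maxLoadII
                obtain ⟨v, -, hv⟩ := Finset.exists_mem_eq_sup (Finset.univ : Finset (Node m))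
                  ⟨(⟨0, hm⟩, ⟨0, hm⟩), Finset.mem_univ _⟩ (loadsUpTo c tb n)
                rw [hv]
                have h1 := hcon (ω v 0) (hωP v) v (by simp [auxC])
                have h2 := (hμP _ (hωP v)).2.2
                have h3 : (loadsUpTo c tb n v : ℝ) ≤ 2048 + (T (ω v 0) : ℝ) + k := by
                  exact_mod_cast h1
                linarith
              obtain ⟨j, hj, hv⟩ := this
              have h1 := Finset.single_le_sum (f := fun j => if ∃ v ∈ auxC ω j,
                2048 + T j + k < loadsUpTo c tb n v then (1:ℝ) else 0)
                (fun s _ => by split_ifs <;> norm_num) hj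
              simp only [if_pos hv] at h1
              linarith
        _ = Q ω req tb + ∑ j ∈ P, ∑ c, W ω req c *
            (if ∃ v ∈ auxC ω j, 2048 + T j + k < loadsUpTo c tb n v then 1 else 0) := by
            rw [Finset.sum_add_distrib]
            congr 1
            rw [Finset.sum_comm]
        _ ≤ _ := by
            have := Finset.sum_le_sum hfile
            linarith
    linarith
  have hsum : ∑ ω : Placement m 1 K, ∑ req : Fin n → Node m × Fin K,
      (∏ u, w1 (ω u)) * ((∏ t, w2 (req t)) *
      (1 - ∑ j ∈ P, δ j - ∑ j ∈ P, B1 ω j - ∑ j ∈ P, B2 req j)) ≤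
      ∑ ω : Placement m 1 K, (∏ u, w1 (ω u)) * ∑ req : Fin n → Node m × Fin K,
      (∏ t, w2 (req t)) * Q' ω req := by
    apply Finset.sum_le_sum; intro ω _
    rw [Finset.mul_sum]
    exact Finset.sum_le_sum fun req _ => hmain ω req
  refine le_trans ?_ hsum
  have hinner : ∀ ω : Placement m 1 K, ∑ req : Fin n → Node m × Fin K,
      (∏ u, w1 (ω u)) * ((∏ t, w2 (req t)) *
      (1 - ∑ j ∈ P, δ j - ∑ j ∈ P, B1 ω j - ∑ j ∈ P, B2 req j)) =
      (∏ u, w1 (ω u)) * (1 - ∑ j ∈ P, δ j - ∑ j ∈ P, B1 ω j - ∑ j ∈ P,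
        ∑ req : Fin n → Node m × Fin K, (∏ t, w2 (req t)) * B2 req j) := by
    intro ω
    rw [← Finset.mul_sum]
    congr 1
    have : ∀ req : Fin n → Node m × Fin K, (∏ t, w2 (req t)) *
        (1 - ∑ j ∈ P, δ j - ∑ j ∈ P, B1 ω j - ∑ j ∈ P, B2 req j) =
        (∏ t, w2 (req t)) * (1 - ∑ j ∈ P, δ j - ∑ j ∈ P, B1 ω j) -
          ∑ j ∈ P, (∏ t, w2 (req t)) * B2 req j := by
      intro req
      rw [← Finset.mul_sum]; ring
    rw [Finset.sum_congr rfl fun req _ => this req, Finset.sum_sub_distrib, ← Finset.sum_mul,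
      hA2, one_mul, Finset.sum_comm]
  rw [Finset.sum_congr rfl fun ω _ => hinner ω]
  set β := ∑ j ∈ P, ∑ req : Fin n → Node m × Fin K, (∏ t, w2 (req t)) * B2 req j with hβ
  have houter : ∑ ω : Placement m 1 K,
      (∏ u, w1 (ω u)) * (1 - ∑ j ∈ P, δ j - ∑ j ∈ P, B1 ω j - β) =
      1 - ∑ j ∈ P, δ j - β - ∑ j ∈ P, ∑ ω : Placement m 1 K, (∏ u, w1 (ω u)) * B1 ω j := by
    have : ∀ ω : Placement m 1 K,
        (∏ u, w1 (ω u)) * (1 - ∑ j ∈ P, δ j - ∑ j ∈ P, B1 ω j - β) =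
        (∏ u, w1 (ω u)) * (1 - ∑ j ∈ P, δ j - β) - ∑ j ∈ P, (∏ u, w1 (ω u)) * B1 ω j := by
      intro ω
      rw [← Finset.mul_sum]; ring
    rw [Finset.sum_congr rfl fun ω _ => this ω, Finset.sum_sub_distrib, ← Finset.sum_mul,
      hA1, one_mul, Finset.sum_comm]
  rw [houter]
  have e1 : β ≤ ∑ j ∈ P, Real.exp (-μ j / 4) := Finset.sum_le_sum fun j _ => hB2 j
  have e2 : ∑ j ∈ P, ∑ ω : Placement m 1 K, (∏ u, w1 (ω u)) * B1 ω j ≤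
      ∑ j ∈ P, Real.exp (-μ j / 4) := Finset.sum_le_sum fun j _ => hB1 j
  have e3 : ∑ j ∈ P, (2 * Real.exp (-(p j * (n : ℝ)) / 4) +
          (T j : ℝ) * Real.exp (- (p j * (n : ℝ)) ^ (2 / 5 : ℝ) / 2) +
          Real.exp 64 * (p j * (n : ℝ)) ^ (-(k : ℝ) / 5)) =
      2 * ∑ j ∈ P, Real.exp (-μ j / 4) + ∑ j ∈ P, δ j := by
    rw [Finset.mul_sum, ← Finset.sum_add_distrib]
    apply Finset.sum_congr rfl
    intro j _
    simp only [δ, μ]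
    ring
  rw [e3]
  linarith

/-! ### The Uniform and Zipf examples -/

lemma aux_Kf_le (ε : ℝ) (hε1 : ε < 1) (n : ℕ) (hn : 1 ≤ n) :
    (Kf ε n : ℝ) ≤ 2 * (n : ℝ) ^ (1 - ε) := by
  have h1 : (1:ℝ) ≤ (n : ℝ) := by exact_mod_cast hn
  have h2 : 1 ≤ (n : ℝ) ^ (1 - ε) := Real.one_le_rpow h1 (by linarith)
  have := Nat.ceil_lt_add_one (show 0 ≤ (n : ℝ) ^ (1 - ε) by linarith)
  unfold Kf
  linarith

lemma aux_hyp (ε : ℝ) (hε0 : 0 < ε) (hε1 : ε < 1) (q : (m : ℕ) → Fin (Kf ε (m ^ 2)) → ℝ)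
    (δ A : ℝ) (hδ : 0 < δ) (hA : 0 < A)
    (h : ∀ m, 1 ≤ m → ∀ j, A * ((m ^ 2 : ℕ) : ℝ) ^ δ ≤ q m j * ((m ^ 2 : ℕ) : ℝ)) :
    ∃ c : ℝ, 0 < c ∧
      Filter.Tendsto (fun m : ℕ =>
          ∑ j : Fin (Kf ε (m ^ 2)), (q m j * ((m ^ 2 : ℕ) : ℝ)) ^ (-c)) atTop (nhds 0) := by
  refine ⟨1 / δ, by positivity, ?_⟩
  have hsq : Tendsto (fun m : ℕ => ((m ^ 2 : ℕ) : ℝ)) atTop atTop :=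
    tendsto_natCast_atTop_atTop.comp (tendsto_pow_atTop (by norm_num))
  have ht : Tendsto (fun m : ℕ => (2 * A ^ (-(1/δ))) * ((m ^ 2 : ℕ) : ℝ) ^ (-ε)) atTop (nhds 0) := by
    have := ((tendsto_rpow_neg_atTop hε0).comp hsq).const_mul (2 * A ^ (-(1/δ)))
    simpa using this
  apply squeeze_zero' _ _ ht
  · filter_upwards [Filter.eventually_ge_atTop 1] with m hm
    apply Finset.sum_nonneg
    intro j _
    apply Real.rpow_nonneg
    exact le_trans (by positivity) (h m hm j)
  · filter_upwards [Filter.eventually_ge_atTop 1] with m hm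
    have hn1 : 1 ≤ m ^ 2 := Nat.one_le_pow _ _ hm
    have hn : (1:ℝ) ≤ ((m ^ 2 : ℕ) : ℝ) := by exact_mod_cast hn1
    set x : ℝ := ((m ^ 2 : ℕ) : ℝ) with hx
    have hx0 : 0 < x := by linarith
    calc ∑ j : Fin (Kf ε (m ^ 2)), (q m j * x) ^ (-(1/δ))
        ≤ ∑ j : Fin (Kf ε (m ^ 2)), (A * x ^ δ) ^ (-(1/δ)) := by
          apply Finset.sum_le_sum
          intro j _
          apply Real.rpow_le_rpow_of_nonpos (by positivity) (h m hm j)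
          have : 0 < 1/δ := by positivity
          linarith
      _ = (Kf ε (m ^ 2) : ℝ) * (A * x ^ δ) ^ (-(1/δ)) := by
          rw [Finset.sum_const, Finset.card_univ, Fintype.card_fin, nsmul_eq_mul]
      _ ≤ (2 * x ^ (1 - ε)) * (A * x ^ δ) ^ (-(1/δ)) := by
          apply mul_le_mul_of_nonneg_right (aux_Kf_le ε hε1 _ hn1) (by positivity)
      _ = (2 * A ^ (-(1/δ))) * x ^ (-ε) := by
          rw [Real.mul_rpow hA.le (by positivity), ← Real.rpow_mul hx0.le]
          have e1 : δ * (-(1/δ)) = -1 := by field_simp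
          have e2 : x ^ (-ε) = x ^ (1 - ε) * x ^ (-1 : ℝ) := by
            rw [← Real.rpow_add hx0]; congr 1; ring
          rw [e1, e2]; ring

lemma aux_uniform (ε : ℝ) (hε0 : 0 < ε) (hε1 : ε < 1) : ∃ c : ℝ, 0 < c ∧
      Filter.Tendsto (fun m : ℕ =>
          ∑ _j : Fin (Kf ε (m ^ 2)),
            (((Kf ε (m ^ 2) : ℝ))⁻¹ * ((m ^ 2 : ℕ) : ℝ)) ^ (-c))
        atTop (nhds 0) := by
  apply aux_hyp ε hε0 hε1 (fun m _ => ((Kf ε (m ^ 2) : ℝ))⁻¹) ε (1/2) hε0 (by norm_num)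
  intro m hm j
  have hn1 : 1 ≤ m ^ 2 := Nat.one_le_pow _ _ hm
  have hn : (1:ℝ) ≤ ((m ^ 2 : ℕ) : ℝ) := by exact_mod_cast hn1
  have hK := aux_Kf_le ε hε1 _ hn1
  have hK0 : (0:ℝ) < (Kf ε (m ^ 2) : ℝ) := by exact_mod_cast j.pos
  set x : ℝ := ((m ^ 2 : ℕ) : ℝ) with hx
  have hx0 : 0 < x := by linarith
  rw [inv_mul_eq_div, le_div_iff₀ hK0]
  calc 1 / 2 * x ^ ε * (Kf ε (m ^ 2) : ℝ) ≤ 1 / 2 * x ^ ε * (2 * x ^ (1 - ε)) := by gcongr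
    _ = x ^ ε * x ^ (1 - ε) := by ring
    _ = x := by rw [← Real.rpow_add hx0]; simp

lemma aux_zipf (ε : ℝ) (hε0 : 0 < ε) (hε1 : ε < 1) (γ : ℝ) (hγ : 1 ≤ γ) (h : (γ - 1) / γ < ε) :
      ∃ c : ℝ, 0 < c ∧
        Filter.Tendsto (fun m : ℕ =>
            ∑ j : Fin (Kf ε (m ^ 2)),
              (zipfP (Kf ε (m ^ 2)) γ j * ((m ^ 2 : ℕ) : ℝ)) ^ (-c))
          atTop (nhds 0) := by
  have hγ0 : 0 < γ := by linarith
  have hη : 0 < 1 - γ * (1 - ε) := by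
    rw [div_lt_iff₀ hγ0] at h; linarith
  set η := 1 - γ * (1 - ε) with hηd
  have hA : 0 < (2 ^ γ * (1 + 2 / η))⁻¹ := by positivity
  apply aux_hyp ε hε0 hε1 (fun m j => zipfP (Kf ε (m ^ 2)) γ j) (η / 2)
    (2 ^ γ * (1 + 2 / η))⁻¹ (by positivity) hA
  intro m hm j
  have hn1 : 1 ≤ m ^ 2 := Nat.one_le_pow _ _ hm
  have hn : (1:ℝ) ≤ ((m ^ 2 : ℕ) : ℝ) := by exact_mod_cast hn1
  have hK := aux_Kf_le ε hε1 _ hn1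
  have hK1 : 0 < Kf ε (m ^ 2) := j.pos
  have hK0 : (0:ℝ) < (Kf ε (m ^ 2) : ℝ) := by exact_mod_cast j.pos
  have hKn : Kf ε (m ^ 2) ≤ m ^ 2 := by
    apply Nat.ceil_le.2
    calc ((m ^ 2 : ℕ) : ℝ) ^ (1 - ε) ≤ ((m ^ 2 : ℕ) : ℝ) ^ (1 : ℝ) :=
          Real.rpow_le_rpow_of_exponent_le hn (by linarith)
      _ = _ := Real.rpow_one _
  have hKx : (Kf ε (m ^ 2) : ℝ) ≤ ((m ^ 2 : ℕ) : ℝ) := by exact_mod_cast hKn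
  set x : ℝ := ((m ^ 2 : ℕ) : ℝ) with hx
  have hx0 : 0 < x := by linarith
  unfold zipfP
  set H := ∑ i : Fin (Kf ε (m ^ 2)), (((i.val + 1 : ℕ) : ℝ) ^ γ)⁻¹ with hH
  have hHpos : 0 < H := Finset.sum_pos (fun i _ => by positivity) ⟨j, Finset.mem_univ _⟩
  have hHle : H ≤ (1 + 2 / η) * x ^ (η / 2) := by
    have h1 : H ≤ ((harmonic (Kf ε (m ^ 2)) : ℚ) : ℝ) := by
      unfold harmonic
      rw [hH, Finset.sum_range]
      push_cast
      apply Finset.sum_le_sum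
      intro i _
      have : (1:ℝ) ≤ (i.val : ℝ) + 1 := by
        have : (0:ℝ) ≤ (i.val : ℝ) := Nat.cast_nonneg _
        linarith
      apply inv_anti₀ (by linarith)
      calc (i.val : ℝ) + 1 = ((i.val : ℝ) + 1) ^ (1:ℝ) := (Real.rpow_one _).symm
        _ ≤ _ := Real.rpow_le_rpow_of_exponent_le this hγ
    have h2 := harmonic_le_one_add_log (Kf ε (m ^ 2))
    have h3 : Real.log (Kf ε (m ^ 2)) ≤ Real.log x := Real.log_le_log hK0 hKx
    have h4 : Real.log x ≤ x ^ (η/2) / (η/2) := Real.log_le_rpow_div hx0.le (by positivity)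
    have h5 : 1 ≤ x ^ (η/2) := Real.one_le_rpow hn (by positivity)
    have h6 : x ^ (η/2) / (η/2) = 2 / η * x ^ (η/2) := by field_simp
    linarith
  have hKγ : ((j.val + 1 : ℕ) : ℝ) ^ γ ≤ 2 ^ γ * x ^ (γ * (1 - ε)) := by
    calc ((j.val + 1 : ℕ) : ℝ) ^ γ ≤ (2 * x ^ (1 - ε)) ^ γ := by
          apply Real.rpow_le_rpow (by positivity) _ hγ0.le
          refine le_trans ?_ hK
          exact_mod_cast j.2
      _ = _ := by
          rw [Real.mul_rpow (by norm_num) (by positivity), ← Real.rpow_mul hx0.le]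
          congr 2; ring
  have hj0 : 0 < ((j.val + 1 : ℕ) : ℝ) ^ γ := by positivity
  have hrw : (((j.val + 1 : ℕ) : ℝ) ^ γ)⁻¹ / H * x = x / (((j.val + 1 : ℕ) : ℝ) ^ γ * H) := by
    field_simp
  rw [hrw, le_div_iff₀ (by positivity)]
  calc (2 ^ γ * (1 + 2 / η))⁻¹ * x ^ (η / 2) * (((j.val + 1 : ℕ) : ℝ) ^ γ * H)
      ≤ (2 ^ γ * (1 + 2 / η))⁻¹ * x ^ (η / 2) *
        ((2 ^ γ * x ^ (γ * (1 - ε))) * ((1 + 2 / η) * x ^ (η / 2))) := by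
        apply mul_le_mul_of_nonneg_left _ (by positivity)
        exact mul_le_mul hKγ hHle hHpos.le (by positivity)
    _ = ((2 ^ γ * (1 + 2 / η))⁻¹ * (2 ^ γ * (1 + 2 / η))) *
          (x ^ (η / 2) * x ^ (γ * (1 - ε)) * x ^ (η / 2)) := by ring
    _ = x := by
        rw [inv_mul_cancel₀ (by positivity), one_mul, ← Real.rpow_add hx0, ← Real.rpow_add hx0]
        have : η / 2 + γ * (1 - ε) + η / 2 = 1 := by rw [hηd]; ring
        rw [this, Real.rpow_one]

lemma aux_main (ε : ℝ) (p : (n : ℕ) → Fin (Kf ε n) → ℝ)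
      (hp0 : ∀ n j, 0 ≤ p n j) (hp1 : ∀ n, 1 ≤ n → ∑ j, p n j = 1)
      (c : ℝ) (hc : 0 < c)
      (ht : Filter.Tendsto (fun m : ℕ =>
            ∑ j : Fin (Kf ε (m ^ 2)), (p (m ^ 2) j * ((m ^ 2 : ℕ) : ℝ)) ^ (-c))
          atTop (nhds 0)) :
      ∃ C : ℝ, 0 < C ∧
        Filter.Tendsto (fun m : ℕ =>
            probIIP m 1 (Kf ε (m ^ 2)) (2 * m) (m ^ 2) (p (m ^ 2))
              {x | (maxLoadII x.2.2.1 x.2.2.2 : ℝ) ≤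
                C * Real.log (Real.log ((m ^ 2 : ℕ) : ℝ))})
          atTop (nhds 1) := by
  obtain ⟨k, hk⟩ := exists_nat_ge (5 * c)
  obtain ⟨μ0, hμ020, hμ0⟩ := aux_num c k hk
  have hμ0pos : 0 < μ0 := lt_of_lt_of_le (by norm_num) hμ020
  refine ⟨2055 + k, by positivity, ?_⟩
  have hll : ∀ᶠ m : ℕ in atTop,
      (2048 : ℝ) + ((Nat.clog 2 (Nat.clog 2 (m ^ 2)) : ℕ) : ℝ) + k ≤
      (2055 + k) * Real.log (Real.log ((m ^ 2 : ℕ) : ℝ)) :=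
    (tendsto_pow_atTop (α := ℕ) (by norm_num : (2:ℕ) ≠ 0)).eventually (aux_loglog k)
  have hsmall := ht.eventually (gt_mem_nhds (Real.rpow_pos_of_pos hμ0pos (-c)))
  have hlow : Tendsto (fun m : ℕ => 1 - (4 + Real.exp 64) *
      ∑ j : Fin (Kf ε (m ^ 2)), (p (m ^ 2) j * ((m ^ 2 : ℕ) : ℝ)) ^ (-c)) atTop (nhds 1) := by
    have := (ht.const_mul (4 + Real.exp 64)).const_sub 1
    simpa using this
  have key : ∀ᶠ m : ℕ in atTop, 1 - (4 + Real.exp 64) *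
      ∑ j : Fin (Kf ε (m ^ 2)), (p (m ^ 2) j * ((m ^ 2 : ℕ) : ℝ)) ^ (-c) ≤
        probIIP m 1 (Kf ε (m ^ 2)) (2 * m) (m ^ 2) (p (m ^ 2))
              {x | (maxLoadII x.2.2.1 x.2.2.2 : ℝ) ≤
                (2055 + k) * Real.log (Real.log ((m ^ 2 : ℕ) : ℝ))} ∧
        probIIP m 1 (Kf ε (m ^ 2)) (2 * m) (m ^ 2) (p (m ^ 2))
              {x | (maxLoadII x.2.2.1 x.2.2.2 : ℝ) ≤
                (2055 + k) * Real.log (Real.log ((m ^ 2 : ℕ) : ℝ))} ≤ 1 := by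
    filter_upwards [hll, hsmall, Filter.eventually_ge_atTop 1] with m h1 h2 hm
    have hn1 : 1 ≤ m ^ 2 := Nat.one_le_pow _ _ hm
    have hx0 : (0:ℝ) < ((m ^ 2 : ℕ) : ℝ) := by exact_mod_cast hn1
    have hterm0 : ∀ j, 0 ≤ (p (m ^ 2) j * ((m ^ 2 : ℕ) : ℝ)) ^ (-c) := fun j =>
      Real.rpow_nonneg (mul_nonneg (hp0 _ _) hx0.le) _
    have hbig : ∀ j, 0 < p (m ^ 2) j → μ0 ≤ p (m ^ 2) j * ((m ^ 2 : ℕ) : ℝ) := by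
      intro j hj
      by_contra hcon
      have h3 := Real.rpow_le_rpow_of_nonpos (mul_pos hj hx0) (not_le.1 hcon).le
        (show -c ≤ 0 by linarith)
      have h4 := Finset.single_le_sum
        (f := fun j => (p (m ^ 2) j * ((m ^ 2 : ℕ) : ℝ)) ^ (-c))
        (fun j _ => hterm0 j) (Finset.mem_univ j)
      linarith
    let T : Fin (Kf ε (m ^ 2)) → ℕ := fun j =>
      Nat.clog 2 (Nat.clog 2 ⌈p (m ^ 2) j * ((m ^ 2 : ℕ) : ℝ)⌉₊)
    have hple : ∀ j, p (m ^ 2) j ≤ 1 := by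
      intro j
      rw [← hp1 (m ^ 2) hn1]
      exact Finset.single_le_sum (fun j _ => hp0 _ j) (Finset.mem_univ j)
    obtain ⟨b1, b2⟩ := aux_prob_bounds m (Kf ε (m ^ 2)) hm (p (m ^ 2)) (hp0 _) (hp1 _ hn1) k T
      ((2055 + k) * Real.log (Real.log ((m ^ 2 : ℕ) : ℝ))) (by
        intro j hj
        refine ⟨hμ020.trans (hbig j hj), ?_, ?_⟩
        · refine (Nat.le_ceil _).trans ?_
          have h5 := Nat.le_pow_clog (b := 2) (by norm_num)
            ⌈p (m ^ 2) j * ((m ^ 2 : ℕ) : ℝ)⌉₊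
          have h6 := Nat.le_pow_clog (b := 2) (by norm_num)
            (Nat.clog 2 ⌈p (m ^ 2) j * ((m ^ 2 : ℕ) : ℝ)⌉₊)
          have h7 := h5.trans (Nat.pow_le_pow_right (by norm_num : 0 < 2) h6)
          exact_mod_cast h7
        · refine le_trans ?_ h1
          have h5 : ⌈p (m ^ 2) j * ((m ^ 2 : ℕ) : ℝ)⌉₊ ≤ m ^ 2 := by
            apply Nat.ceil_le.2
            exact mul_le_of_le_one_left hx0.le (hple j)
          have h6 : T j ≤ Nat.clog 2 (Nat.clog 2 (m ^ 2)) :=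
            Nat.clog_mono_right _ (Nat.clog_mono_right _ h5)
          have h7 : (T j : ℝ) ≤ ((Nat.clog 2 (Nat.clog 2 (m ^ 2)) : ℕ) : ℝ) := by
            exact_mod_cast h6
          linarith)
    refine ⟨le_trans ?_ b1, b2⟩
    apply sub_le_sub_left
    rw [Finset.mul_sum]
    calc _ ≤ ∑ j ∈ Finset.univ.filter (fun j => 0 < p (m ^ 2) j),
          (4 + Real.exp 64) * (p (m ^ 2) j * ((m ^ 2 : ℕ) : ℝ)) ^ (-c) := by
          apply Finset.sum_le_sum
          intro j hj
          exact hμ0 _ (hbig j (Finset.mem_filter.1 hj).2)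
      _ ≤ _ := Finset.sum_le_sum_of_subset_of_nonneg (Finset.filter_subset _ _)
          (fun j _ _ => mul_nonneg (by positivity) (hterm0 j))
  exact tendsto_of_tendsto_of_tendsto_of_le_of_le' hlow tendsto_const_nhds
    (key.mono fun _ h => h.1) (key.mono fun _ h => h.2)

/-- Let `K = ⌈n^(1-ε)⌉` for a constant `0 < ε < 1`, `M = 1`, and no
proximity constraint (`r = 2m ≥` diameter, so the two candidates are chosen uniformly
among all nodes caching the requested file).  If the popularity distribution `P`
satisfies `∑_j (p_j·n)^(-c) = o(1)` for some constant `c > 0`, then Strategy II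
achieves maximum load `O(log log n)` with probability `1 - o(1)`.  In particular the
Uniform distribution satisfies this hypothesis, and the Zipf distribution with
parameter `γ ≥ 1` satisfies it whenever `ε ∈ ((γ-1)/γ, 1)`. -/
theorem statement11 (ε : ℝ) (hε0 : 0 < ε) (hε1 : ε < 1) :
    (∀ p : (n : ℕ) → Fin (Kf ε n) → ℝ,
      (∀ n j, 0 ≤ p n j) → (∀ n, 1 ≤ n → ∑ j, p n j = 1) →
      (∃ c : ℝ, 0 < c ∧
        Filter.Tendsto (fun m : ℕ =>
            ∑ j : Fin (Kf ε (m ^ 2)), (p (m ^ 2) j * ((m ^ 2 : ℕ) : ℝ)) ^ (-c))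
          atTop (nhds 0)) →
      ∃ C : ℝ, 0 < C ∧
        Filter.Tendsto (fun m : ℕ =>
            probIIP m 1 (Kf ε (m ^ 2)) (2 * m) (m ^ 2) (p (m ^ 2))
              {x | (maxLoadII x.2.2.1 x.2.2.2 : ℝ) ≤
                C * Real.log (Real.log ((m ^ 2 : ℕ) : ℝ))})
          atTop (nhds 1)) ∧
    (∃ c : ℝ, 0 < c ∧
      Filter.Tendsto (fun m : ℕ =>
          ∑ _j : Fin (Kf ε (m ^ 2)),
            (((Kf ε (m ^ 2) : ℝ))⁻¹ * ((m ^ 2 : ℕ) : ℝ)) ^ (-c))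
        atTop (nhds 0)) ∧
    (∀ γ : ℝ, 1 ≤ γ → (γ - 1) / γ < ε →
      ∃ c : ℝ, 0 < c ∧
        Filter.Tendsto (fun m : ℕ =>
            ∑ j : Fin (Kf ε (m ^ 2)),
              (zipfP (Kf ε (m ^ 2)) γ j * ((m ^ 2 : ℕ) : ℝ)) ^ (-c))
          atTop (nhds 0)) := by
  refine ⟨?_, aux_uniform ε hε0 hε1, fun γ hγ h => aux_zipf ε hε0 hε1 γ hγ h⟩
  rintro p hp0 hp1 ⟨c, hc, ht⟩
  exact aux_main ε p hp0 hp1 c hc ht
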